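/- Let r ≥ 2 and let p_{r,k} = N^B_k(θ_B) be the number of decompositions of the highest root θ_B = (1,2,2,…,2) ∈ ℕ^r of B_r as a sum of exactly k positive roots. Let μ_r = (Σ_k k·p_{r,k})/(Σ_k p_{r,k}) and σ_r² = (Σ_k k²·p_{r,k})/(Σ_k p_{r,k}) − μ_r². Then μ_r = [ (5−√5+(25−13√5)r)(5−√5)^r + (5+√5+(25+13√5)r)(5+√5)^r ] / ( 5·[ (5−3√5)(5−√5)^r + (5+3√5)(5+√5)^r ] ) and σ_r² = { 20^{r+1}r² + [ 26(3√5−7)(5−√5)^{2r} − 26(3√5+7)(5+√5)^{2r} + (36/5)·20^{r+1} ]·r + 2(73−25√5)(5−√5)^{2r} + 2(73+25√5)(5+√5)^{2r} − (63/5)·20^{r+1} } / ( −5·[ (5−3√5)(5−√5)^r + (5+3√5)(5+√5)^r ]² ). -/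

import Mathlib

open Polynomial

/-- The positive roots of the Lie algebra of type `B_r` in simple-root coordinates
(`1`-based positions): the interval vectors `α[i,j]` for `1 ≤ i ≤ j ≤ r`, together with
the vectors `β[i,j]` (value `1` at positions `i..j−1`, value `2` at positions `j..r`)
for `1 ≤ i < j ≤ r`. -/
def isPosRootB (r : ℕ) (v : Fin r → ℕ) : Prop :=
  (∃ i j : ℕ, 1 ≤ i ∧ i ≤ j ∧ j ≤ r ∧
    v = fun t => if i ≤ t.val + 1 ∧ t.val + 1 ≤ j then 1 else 0) ∨
  (∃ i j : ℕ, 1 ≤ i ∧ i < j ∧ j ≤ r ∧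
    v = fun t => if i ≤ t.val + 1 ∧ t.val + 1 ≤ j - 1 then 1
      else if j ≤ t.val + 1 then 2 else 0)

/-- `NB r k λ` is the number of decompositions of the weight `λ` as a sum of exactly `k`
positive roots of `B_r`. -/
noncomputable def NB (r k : ℕ) (lam : Fin r → ℕ) : ℕ :=
  Set.ncard {m : (Fin r → ℕ) →₀ ℕ |
    (∀ v ∈ m.support, isPosRootB r v) ∧
    (m.sum fun _ n => n) = k ∧
    (m.sum fun v n => n • v) = lam}

/-- The highest root `θ_B = (1,2,2,…,2)` of `B_r` in simple-root coordinates. -/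
def thetaB (r : ℕ) : Fin r → ℕ := fun t => if t.val = 0 then 1 else 2

/-- `pB r k` is the number of decompositions of the highest root of `B_r` as a sum of
exactly `k` positive roots (as a real number). -/
noncomputable def pB (r k : ℕ) : ℝ := (NB r k (thetaB r) : ℝ)

/-- The mean number of positive roots used in the decompositions of the highest root of
`B_r`, each decomposition being equally likely. -/
noncomputable def muB (r : ℕ) : ℝ := (∑' k : ℕ, (k : ℝ) * pB r k) / ∑' k : ℕ, pB r k

/-- The variance of the number of positive roots used in the decompositions of the
highest root of `B_r`. -/
noncomputable def varB (r : ℕ) : ℝ :=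
  (∑' k : ℕ, (k : ℝ) ^ 2 * pB r k) / (∑' k : ℕ, pB r k) - muB r ^ 2


abbrev BSt := Multiset (ℕ × ℕ) × ℕ × ℕ

def bcnt (R : Multiset (ℕ × ℕ)) (s : ℕ) : ℕ := R.countP (fun p => p.1 ≤ s ∧ s ≤ p.2)

def bth (s : ℕ) : ℕ := if s = 1 then 1 else 2

def BP (t : ℕ) (R : Multiset (ℕ × ℕ)) (a b : ℕ) : Prop :=
  (∀ p ∈ R, 1 ≤ p.1 ∧ p.1 ≤ p.2 ∧ p.2 < t) ∧ (1 ≤ a ∧ a ≤ t) ∧ (1 ≤ b ∧ b ≤ t) ∧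
  ∀ s, 1 ≤ s → s ≤ t → bcnt R s + (if a ≤ s then 1 else 0) + (if b ≤ s then 1 else 0) = bth s

lemma bcnt_cons (p : ℕ × ℕ) (R) (s : ℕ) :
    bcnt (p ::ₘ R) s = bcnt R s + if p.1 ≤ s ∧ s ≤ p.2 then 1 else 0 := by
  unfold bcnt; rw [Multiset.countP_cons]

lemma bcnt_zero (s : ℕ) : bcnt 0 s = 0 := by simp [bcnt]

lemma bcnt_eq_zero {R : Multiset (ℕ × ℕ)} {s : ℕ} :
    bcnt R s = 0 ↔ ∀ p ∈ R, ¬ (p.1 ≤ s ∧ s ≤ p.2) := by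
  unfold bcnt; rw [Multiset.countP_eq_zero]

lemma BP_swap {t R a b} (h : BP t R a b) : BP t R b a := by
  obtain ⟨h1, h2, h3, h4⟩ := h
  refine ⟨h1, h3, h2, fun s hs hs' => ?_⟩
  have := h4 s hs hs'
  omega

lemma bth_two {t : ℕ} (ht : 2 ≤ t) : bth t = 2 := by
  unfold bth; rw [if_neg (by omega)]

/-- peel off an interval ending at `t` -/
lemma exists_end {t : ℕ} {R : Multiset (ℕ × ℕ)}
    (h : ∀ p ∈ R, 1 ≤ p.1 ∧ p.1 ≤ p.2 ∧ p.2 < t + 1) (hc : bcnt R t ≠ 0) :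
    ∃ a R', R = (a, t) ::ₘ R' ∧ 1 ≤ a ∧ a ≤ t := by
  rw [Ne, bcnt_eq_zero] at hc
  push Not at hc
  obtain ⟨⟨a, b⟩, hp, h1, h2⟩ := hc
  have := h _ hp
  simp only at this h1 h2
  have hb : b = t := by omega
  subst hb
  obtain ⟨R', rfl⟩ := Multiset.exists_cons_of_mem hp
  exact ⟨a, R', rfl, by omega, by omega⟩

lemma BP_step_keep {t R a b} (ht : 2 ≤ t) (ha : a ≤ t) (hb : b ≤ t) :
    BP (t + 1) R a b ↔ BP t R a b := by
  constructor
  · rintro ⟨h1, h2, h3, h4⟩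
    have h0 : bcnt R t = 0 := by
      have := h4 t (by omega) (by omega)
      rw [bth_two ht, if_pos ha, if_pos hb] at this
      omega
    rw [bcnt_eq_zero] at h0
    refine ⟨fun p hp => ?_, ⟨h2.1, ha⟩, ⟨h3.1, hb⟩, fun s hs hs' => h4 s hs (by omega)⟩
    have := h1 p hp
    have := h0 p hp
    omega
  · rintro ⟨h1, h2, h3, h4⟩
    refine ⟨fun p hp => ?_, by omega, by omega, fun s hs hs' => ?_⟩
    · have := h1 p hp
      omega
    · rcases Nat.lt_or_ge t s with h | h
      · have h0 : bcnt R s = 0 := by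
          rw [bcnt_eq_zero]
          intro p hp
          have := h1 p hp
          omega
        rw [h0, if_pos (by omega), if_pos (by omega), bth_two (by omega)]
      · exact h4 s hs h

lemma BP_step_one {t R b} (ht : 2 ≤ t) (hb : b ≤ t) :
    BP (t + 1) R b (t + 1) ↔ ∃ a R', R = (a, t) ::ₘ R' ∧ BP t R' a b := by
  constructor
  · rintro ⟨h1, h2, h3, h4⟩
    have h5 := h4 t (by omega) (by omega)
    rw [bth_two ht, if_pos hb, if_neg (by omega)] at h5
    obtain ⟨a, R', rfl, ha, ha'⟩ := exists_end h1 (by omega)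
    refine ⟨a, R', rfl, ?_⟩
    rw [← BP_step_keep ht ha' hb]
    refine ⟨fun p hp => h1 p (Multiset.mem_cons_of_mem hp), by omega, by omega, fun s hs hs' => ?_⟩
    have h6 := h4 s hs hs'
    rw [bcnt_cons] at h6
    simp only at h6
    split_ifs at h6 ⊢ <;> omega
  · rintro ⟨a, R', rfl, h⟩
    have ha := h.2.1
    rw [← BP_step_keep ht h.2.1.2 hb] at h
    obtain ⟨h1, h2, h3, h4⟩ := h
    refine ⟨fun p hp => ?_, h3, by omega, fun s hs hs' => ?_⟩
    · rcases Multiset.mem_cons.1 hp with rfl | hp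
      · simp only; omega
      · exact h1 p hp
    · have h6 := h4 s hs hs'
      rw [bcnt_cons]
      simp only
      split_ifs at h6 ⊢ <;> omega

lemma BP_step_two {t R} (ht : 2 ≤ t) :
    BP (t + 1) R (t + 1) (t + 1) ↔
      ∃ a b R', R = (a, t) ::ₘ (b, t) ::ₘ R' ∧ BP t R' a b ∧ a ≤ b := by
  constructor
  · rintro ⟨h1, h2, h3, h4⟩
    have h5 := h4 t (by omega) (by omega)
    rw [bth_two ht, if_neg (by omega)] at h5
    obtain ⟨a, R', rfl, ha, ha'⟩ := exists_end h1 (by omega)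
    have h7 : BP (t + 1) R' a (t + 1) := by
      refine ⟨fun p hp => h1 p (Multiset.mem_cons_of_mem hp), by omega, by omega,
        fun s hs hs' => ?_⟩
      have h6 := h4 s hs hs'
      rw [bcnt_cons] at h6
      simp only at h6
      split_ifs at h6 ⊢ <;> omega
    obtain ⟨b, R'', rfl, h8⟩ := (BP_step_one ht ha').1 h7
    rcases le_total a b with h | h
    · exact ⟨a, b, R'', rfl, BP_swap h8, h⟩
    · exact ⟨b, a, R'', Multiset.cons_swap _ _ _, h8, h⟩
  · rintro ⟨a, b, R', rfl, h, hab⟩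
    have ha := h.2.1
    have h7 := (BP_step_one ht ha.2).2 ⟨b, R', rfl, BP_swap h⟩
    obtain ⟨h1, h2, h3, h4⟩ := h7
    refine ⟨fun p hp => ?_, by omega, by omega, fun s hs hs' => ?_⟩
    · rcases Multiset.mem_cons.1 hp with rfl | hp
      · simp only; omega
      · exact h1 p hp
    · have h6 := h4 s hs hs'
      rw [bcnt_cons]
      simp only
      split_ifs at h6 ⊢ <;> omega

def bswap (x : BSt) : BSt := (x.1, x.2.2, x.2.1)
def bg (t : ℕ) (x : BSt) : BSt := ((x.2.1, t) ::ₘ x.1, x.2.2, t + 1)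
def bh (t : ℕ) (x : BSt) : BSt := ((x.2.1, t) ::ₘ (x.2.2, t) ::ₘ x.1, t + 1, t + 1)

def bDS : ℕ → Finset BSt × Finset BSt
  | 0 => ({((0 : Multiset (ℕ × ℕ)), 1, 2)}, {(({(1, 1)} : Multiset (ℕ × ℕ)), 2, 2)})
  | n + 1 =>
    ((bDS n).1 ∪ (((bDS n).1 ∪ (bDS n).1.image bswap) ∪ (bDS n).2).image (bg (n + 2)),
     (bDS n).2 ∪ ((bDS n).1 ∪ (bDS n).2).image (bh (n + 2)))

lemma BP_two {R a b} : BP 2 R a b ↔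
    (R = 0 ∧ a = 1 ∧ b = 2) ∨ (R = 0 ∧ a = 2 ∧ b = 1) ∨ (R = {(1, 1)} ∧ a = 2 ∧ b = 2) := by
  constructor
  · rintro ⟨h1, h2, h3, h4⟩
    have h5 := h4 1 (by omega) (by omega)
    have hR : ∀ R : Multiset (ℕ × ℕ), (∀ p ∈ R, 1 ≤ p.1 ∧ p.1 ≤ p.2 ∧ p.2 < 2) →
        bcnt R 1 = 0 → R = 0 := by
      intro R h1 h
      rw [bcnt_eq_zero] at h
      rw [Multiset.eq_zero_iff_forall_notMem]
      intro p hp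
      have := h p hp
      have := h1 p hp
      omega
    have hb1 : bth 1 = 1 := rfl
    rw [hb1] at h5
    by_cases hc : bcnt R 1 = 0
    · have := hR R h1 hc
      subst this
      split_ifs at h5 <;> simp <;> omega
    · obtain ⟨a', R', rfl, ha, ha'⟩ := exists_end h1 hc
      rw [bcnt_cons] at h5
      rw [if_pos (by simpa using ha')] at h5
      have := hR R' (fun p hp => h1 p (Multiset.mem_cons_of_mem hp)) (by omega)
      subst this
      right; right
      have : a' = 1 := by omega
      subst this
      refine ⟨rfl, ?_⟩
      split_ifs at h5 <;> omega
  · have key : ∀ s, 1 ≤ s → s ≤ 2 → s = 1 ∨ s = 2 := by omega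
    rintro (⟨rfl, rfl, rfl⟩ | ⟨rfl, rfl, rfl⟩ | ⟨rfl, rfl, rfl⟩)
    all_goals
      refine ⟨by simp, by omega, by omega, fun s hs hs' => ?_⟩
      rcases key s hs hs' with rfl | rfl <;> rfl

lemma mem_bDS (n : ℕ) :
    (∀ R a b, (R, a, b) ∈ (bDS n).1 ↔ BP (n + 2) R a b ∧ a < b) ∧
    (∀ R a b, (R, a, b) ∈ (bDS n).2 ↔ BP (n + 2) R a b ∧ a = b) := by
  induction n with
  | zero =>
    constructor
    · intro R a b
      simp only [bDS, Finset.mem_singleton, Prod.mk.injEq, zero_add, BP_two]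
      constructor
      · rintro ⟨h, rfl, rfl⟩
        exact ⟨Or.inl ⟨h, rfl, rfl⟩, by omega⟩
      · rintro ⟨h | h | h, h'⟩
        · exact h
        · omega
        · omega
    · intro R a b
      simp only [bDS, Finset.mem_singleton, Prod.mk.injEq, zero_add, BP_two]
      constructor
      · rintro ⟨h, rfl, rfl⟩
        exact ⟨Or.inr (Or.inr ⟨h, rfl, rfl⟩), by omega⟩
      · rintro ⟨h | h | h, h'⟩
        · omega
        · omega
        · exact h
  | succ n ih =>
    obtain ⟨hD, hS⟩ := ih
    constructor
    · intro R a b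
      simp only [bDS, Finset.mem_union, Finset.mem_image, Prod.exists, bswap, bg, Prod.mk.injEq]
      constructor
      · rintro (h | ⟨R', a', b', h, rfl, rfl, rfl⟩)
        · rw [hD] at h
          exact ⟨(BP_step_keep (by omega) h.1.2.1.2 h.1.2.2.1.2).2 h.1, h.2⟩
        · have h' : BP (n + 2) R' a' b' := by
            rcases h with (h | ⟨R'', a'', b'', h, rfl, rfl, rfl⟩) | h
            · exact ((hD _ _ _).1 h).1
            · exact BP_swap ((hD _ _ _).1 h).1
            · exact ((hS _ _ _).1 h).1
          have hb := h'.2.2.1.2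
          exact ⟨(BP_step_one (by omega) hb).2 ⟨a', R', rfl, h'⟩, by omega⟩
      · rintro ⟨h, hab⟩
        have hb := h.2.2.1.2
        rcases Nat.lt_or_ge b (n + 3) with hb' | hb'
        · left
          rw [hD]
          exact ⟨(BP_step_keep (by omega) (by omega) (by omega)).1 h, hab⟩
        · right
          have hb'' : b = n + 2 + 1 := by omega
          subst hb''
          obtain ⟨a', R', rfl, h'⟩ := (BP_step_one (by omega) (by omega)).1 h
          refine ⟨R', a', a, ?_, rfl, rfl, rfl⟩
          rcases lt_trichotomy a' a with h | h | h
          · left; left; rw [hD]; exact ⟨h', h⟩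
          · right; rw [hS]; exact ⟨h', h⟩
          · left; right; exact ⟨R', a, a', by rw [hD]; exact ⟨BP_swap h', h⟩, rfl, rfl, rfl⟩
    · intro R a b
      simp only [bDS, Finset.mem_union, Finset.mem_image, Prod.exists, bh, Prod.mk.injEq]
      constructor
      · rintro (h | ⟨R', a', b', h, rfl, rfl, rfl⟩)
        · rw [hS] at h
          exact ⟨(BP_step_keep (by omega) h.1.2.1.2 h.1.2.2.1.2).2 h.1, h.2⟩
        · have h' : BP (n + 2) R' a' b' ∧ a' ≤ b' := by
            rcases h with h | h
            · have := (hD _ _ _).1 h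
              exact ⟨this.1, this.2.le⟩
            · have := (hS _ _ _).1 h
              exact ⟨this.1, this.2.le⟩
          exact ⟨(BP_step_two (by omega)).2 ⟨a', b', R', rfl, h'⟩, by omega⟩
      · rintro ⟨h, rfl⟩
        have hb := h.2.2.1.2
        rcases Nat.lt_or_ge a (n + 3) with hb' | hb'
        · left
          rw [hS]
          exact ⟨(BP_step_keep (by omega) (by omega) (by omega)).1 h, rfl⟩
        · right
          have hb'' : a = n + 2 + 1 := by omega
          subst hb''
          obtain ⟨a', b', R', rfl, h', hab⟩ := (BP_step_two (by omega)).1 h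
          refine ⟨R', a', b', ?_, rfl, rfl, rfl⟩
          rcases hab.lt_or_eq with h | h
          · left; rw [hD]; exact ⟨h', h⟩
          · right; rw [hS]; exact ⟨h', h⟩

/-- cancel the marked interval -/
lemma cons_end_inj {t a a' : ℕ} {R R' : Multiset (ℕ × ℕ)}
    (h : ∀ p ∈ R, p.2 < t) (he : (a, t) ::ₘ R = (a', t) ::ₘ R')
    : a = a' ∧ R = R' := by
  rcases Multiset.cons_eq_cons.1 he with ⟨h1, h2⟩ | ⟨h1, cs, h2, h3⟩
  · exact ⟨by simpa using h1, h2⟩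
  · have := h (a', t) (by rw [h2]; exact Multiset.mem_cons_self _ _)
    simp at this

lemma cons2_end_inj {t a a' b b' : ℕ} {R R' : Multiset (ℕ × ℕ)}
    (h : ∀ p ∈ R, p.2 < t) (h' : ∀ p ∈ R', p.2 < t) (hab : a ≤ b) (hab' : a' ≤ b')
    (he : (a, t) ::ₘ (b, t) ::ₘ R = (a', t) ::ₘ (b', t) ::ₘ R')
    : R = R' ∧ a = a' ∧ b = b' := by
  rcases Multiset.cons_eq_cons.1 he with ⟨h1, h2⟩ | ⟨h1, cs, h2, h3⟩
  · obtain ⟨h3, h4⟩ := cons_end_inj h h2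
    exact ⟨h4, by simpa using h1, h3⟩
  · obtain ⟨rfl, rfl⟩ := cons_end_inj h h2
    obtain ⟨rfl, rfl⟩ := cons_end_inj h' h3
    exact absurd (by simp; omega) h1

def bsum (A : Finset BSt) (w : ℕ → ℝ) : ℝ := ∑ x ∈ A, w (Multiset.card x.1)

lemma bsum_D (n : ℕ) (w : ℕ → ℝ) : bsum (bDS (n + 1)).1 w =
    bsum (bDS n).1 w + 2 * bsum (bDS n).1 (fun k => w (k + 1))
      + bsum (bDS n).2 (fun k => w (k + 1)) := by
  obtain ⟨hD, hS⟩ := mem_bDS n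
  unfold bsum
  simp only [bDS]
  rw [Finset.sum_union, Finset.sum_image, Finset.sum_union, Finset.sum_union, Finset.sum_image]
  · simp only [bg, bswap, Multiset.card_cons]
    ring
  · rintro ⟨R, a, b⟩ - ⟨R', a', b'⟩ - h
    simp only [bswap, Prod.mk.injEq] at h ⊢
    tauto
  · rw [Finset.disjoint_left]
    rintro ⟨R, a, b⟩ h1 h2
    simp only [Finset.mem_image, Prod.exists, bswap, Prod.mk.injEq] at h2
    obtain ⟨R, a', b', h2, rfl, rfl, rfl⟩ := h2
    have := ((hD _ _ _).1 h1).2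
    have := ((hD _ _ _).1 h2).2
    omega
  · rw [Finset.disjoint_left]
    rintro ⟨R, a, b⟩ h1 h2
    have := ((hS _ _ _).1 h2).2
    rcases Finset.mem_union.1 h1 with h1 | h1
    · have := ((hD _ _ _).1 h1).2
      omega
    · simp only [Finset.mem_image, Prod.exists, bswap, Prod.mk.injEq] at h1
      obtain ⟨R, a', b', h3, rfl, rfl, rfl⟩ := h1
      have := ((hD _ _ _).1 h3).2
      omega
  · have key : ∀ R a b, (R, a, b) ∈ ((bDS n).1 ∪ (bDS n).1.image bswap) ∪ (bDS n).2 →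
        ∀ p ∈ R, p.2 < n + 2 := by
      intro R a b h p hp
      simp only [Finset.mem_union, Finset.mem_image, Prod.exists, bswap, Prod.mk.injEq] at h
      rcases h with (h | ⟨R'', a'', b'', h, rfl, rfl, rfl⟩) | h
      · exact (((hD _ _ _).1 h).1.1 p hp).2.2
      · exact (((hD _ _ _).1 h).1.1 p hp).2.2
      · exact (((hS _ _ _).1 h).1.1 p hp).2.2
    rintro ⟨R, a, b⟩ h1 ⟨R', a', b'⟩ h2 h
    simp only [bg, Prod.mk.injEq] at h ⊢
    have := cons_end_inj (key _ _ _ h1) h.1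
    tauto
  · rw [Finset.disjoint_left]
    rintro ⟨R, a, b⟩ h1 h2
    simp only [Finset.mem_image, Prod.exists, bg, Prod.mk.injEq] at h2
    obtain ⟨R, a', b', -, rfl, rfl, rfl⟩ := h2
    have := ((hD _ _ _).1 h1).1.2.2.1.2
    omega

lemma bDS_disj (n : ℕ) : Disjoint (bDS n).1 (bDS n).2 := by
  obtain ⟨hD, hS⟩ := mem_bDS n
  rw [Finset.disjoint_left]
  rintro ⟨R, a, b⟩ h1 h2
  have := ((hD _ _ _).1 h1).2
  have := ((hS _ _ _).1 h2).2
  omega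

lemma bDS_U (n : ℕ) {R a b} (h : (R, a, b) ∈ (bDS n).1 ∪ (bDS n).2) :
    BP (n + 2) R a b ∧ a ≤ b := by
  obtain ⟨hD, hS⟩ := mem_bDS n
  rcases Finset.mem_union.1 h with h | h
  · have := (hD _ _ _).1 h
    exact ⟨this.1, this.2.le⟩
  · have := (hS _ _ _).1 h
    exact ⟨this.1, this.2.le⟩

lemma bh_injOn (n : ℕ) : Set.InjOn (bh (n + 2)) ↑((bDS n).1 ∪ (bDS n).2) := by
  rintro ⟨R, a, b⟩ h1 ⟨R', a', b'⟩ h2 h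
  have h1 := bDS_U n (Finset.mem_coe.1 h1)
  have h2 := bDS_U n (Finset.mem_coe.1 h2)
  simp only [bh, Prod.mk.injEq] at h ⊢
  exact cons2_end_inj (fun p hp => (h1.1.1 p hp).2.2) (fun p hp => (h2.1.1 p hp).2.2) h1.2 h2.2 h.1

lemma bsum_S (n : ℕ) (w : ℕ → ℝ) : bsum (bDS (n + 1)).2 w =
    bsum (bDS n).2 w + bsum (bDS n).1 (fun k => w (k + 2))
      + bsum (bDS n).2 (fun k => w (k + 2)) := by
  obtain ⟨hD, hS⟩ := mem_bDS n
  unfold bsum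
  simp only [bDS]
  rw [Finset.sum_union, Finset.sum_image (bh_injOn n), Finset.sum_union (bDS_disj n)]
  · simp only [bh, Multiset.card_cons]
    ring
  · rw [Finset.disjoint_left]
    rintro ⟨R, a, b⟩ h1 h2
    simp only [Finset.mem_image, Prod.exists, bh, Prod.mk.injEq] at h2
    obtain ⟨R, a', b', -, rfl, rfl, rfl⟩ := h2
    have := ((hS _ _ _).1 h1).1.2.2.1.2
    omega

abbrev BLab := (ℕ × ℕ) ⊕ (ℕ × ℕ)

def bval : BLab → ℕ → ℕ
  | Sum.inl p, s => if p.1 ≤ s ∧ s ≤ p.2 then 1 else 0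
  | Sum.inr p, s => if p.1 ≤ s ∧ s ≤ p.2 - 1 then 1 else if p.2 ≤ s then 2 else 0

def bvalid (r : ℕ) : BLab → Prop
  | Sum.inl p => 1 ≤ p.1 ∧ p.1 ≤ p.2 ∧ p.2 ≤ r
  | Sum.inr p => 1 ≤ p.1 ∧ p.1 < p.2 ∧ p.2 ≤ r

def bvec (r : ℕ) (l : BLab) : Fin r → ℕ := fun t => bval l (t.val + 1)

lemma isPosRootB_iff (r : ℕ) (v : Fin r → ℕ) :
    isPosRootB r v ↔ ∃ l, bvalid r l ∧ bvec r l = v := by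
  constructor
  · rintro (⟨i, j, h1, h2, h3, rfl⟩ | ⟨i, j, h1, h2, h3, rfl⟩)
    · exact ⟨Sum.inl (i, j), ⟨h1, h2, h3⟩, rfl⟩
    · exact ⟨Sum.inr (i, j), ⟨h1, h2, h3⟩, rfl⟩
  · rintro ⟨(⟨i, j⟩ | ⟨i, j⟩), ⟨h1, h2, h3⟩, rfl⟩
    · exact Or.inl ⟨i, j, h1, h2, h3, rfl⟩
    · exact Or.inr ⟨i, j, h1, h2, h3, rfl⟩

lemma bvec_injOn (r : ℕ) : Set.InjOn (bvec r) {l | bvalid r l} := by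
  intro l hl l' hl' h
  have key : ∀ s, 1 ≤ s → s ≤ r → bval l s = bval l' s := by
    intro s hs hs'
    have := congrFun h ⟨s - 1, by omega⟩
    simp only [bvec] at this
    rwa [Nat.sub_add_cancel hs] at this
  rcases l with ⟨i, j⟩ | ⟨i, j⟩ <;> rcases l' with ⟨i', j'⟩ | ⟨i', j'⟩ <;>
    obtain ⟨h1, h2, h3⟩ := hl <;> obtain ⟨h1', h2', h3'⟩ := hl' <;>
    simp only [bval] at key h1 h2 h3 h1' h2' h3'
  · have ki := key i (by omega) (by omega)
    have ki' := key i' (by omega) (by omega)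
    have kj := key j (by omega) (by omega)
    have kj' := key j' (by omega) (by omega)
    have : i = i' ∧ j = j' := by split_ifs at * <;> omega
    rw [this.1, this.2]
  · have kr := key r (by omega) (by omega)
    exfalso
    split_ifs at * <;> omega
  · have kr := key r (by omega) (by omega)
    exfalso
    split_ifs at * <;> omega
  · have ki := key i (by omega) (by omega)
    have hi : i' ≤ i := by split_ifs at ki <;> omega
    clear ki
    have ki' := key i' (by omega) (by omega)
    have hi' : i ≤ i' := by split_ifs at ki' <;> omega
    clear ki'
    have kj := key j (by omega) (by omega)
    have hj : j' ≤ j := by split_ifs at kj <;> omega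
    clear kj
    have kj' := key j' (by omega) (by omega)
    have hj' : j ≤ j' := by split_ifs at kj' <;> omega
    rw [le_antisymm hi hi', le_antisymm hj hj']

def BQ (r : ℕ) (M : Multiset BLab) : Prop :=
  (∀ l ∈ M, bvalid r l) ∧ ∀ s, 1 ≤ s → s ≤ r → (M.map (fun l => bval l s)).sum = bth s

lemma sum_inl (R : Multiset (ℕ × ℕ)) (s : ℕ) :
    ((R.map (Sum.inl : _ → BLab)).map (fun l => bval l s)).sum = bcnt R s := by
  induction R using Multiset.induction with
  | empty => simp [bcnt]
  | cons p R ih =>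
    rw [bcnt_cons, Multiset.map_cons, Multiset.map_cons, Multiset.sum_cons, ih, add_comm]
    rfl

lemma BQ_inl {r : ℕ} (hr : 2 ≤ r) (R : Multiset (ℕ × ℕ)) :
    BQ r (R.map Sum.inl) ↔ BP (r + 1) R (r + 1) (r + 1) := by
  unfold BQ BP
  simp only [sum_inl]
  constructor
  · rintro ⟨h1, h2⟩
    have h1' : ∀ p ∈ R, 1 ≤ p.1 ∧ p.1 ≤ p.2 ∧ p.2 < r + 1 := by
      intro p hp
      have := h1 _ (Multiset.mem_map_of_mem _ hp)
      simp only [bvalid] at this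
      omega
    refine ⟨h1', by omega, by omega, fun s hs hs' => ?_⟩
    rcases Nat.lt_or_ge r s with h | h
    · have h0 : bcnt R s = 0 := by
        rw [bcnt_eq_zero]
        intro p hp
        have := h1' p hp
        omega
      rw [h0, if_pos (by omega), bth_two (by omega)]
    · rw [if_neg (by omega), h2 s hs h, add_zero, add_zero]
  · rintro ⟨h1, -, -, h2⟩
    constructor
    · intro l hl
      obtain ⟨p, hp, rfl⟩ := Multiset.mem_map.1 hl
      have := h1 p hp
      simp only [bvalid]
      omega
    · intro s hs hs'
      have := h2 s hs (by omega)
      rw [if_neg (by omega)] at this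
      omega

lemma BQ_inr {r : ℕ} (hr : 2 ≤ r) (R : Multiset (ℕ × ℕ)) (i j : ℕ) :
    BQ r (Sum.inr (i, j) ::ₘ R.map Sum.inl) ↔ BP r R i j ∧ i < j := by
  unfold BQ BP
  simp only [Multiset.map_cons, Multiset.sum_cons, sum_inl, Multiset.mem_cons, forall_eq_or_imp]
  simp only [bval, bvalid]
  constructor
  · rintro ⟨⟨⟨h0, h0', h0''⟩, h1⟩, h2⟩
    have h3 : bcnt R r = 0 := by
      have := h2 r (by omega) (by omega)
      rw [if_neg (by omega), if_pos (by omega), bth_two hr] at this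
      omega
    rw [bcnt_eq_zero] at h3
    refine ⟨⟨?_, by omega, by omega, fun s hs hs' => ?_⟩, h0'⟩
    · intro p hp
      have h6 := h1 _ (Multiset.mem_map_of_mem _ hp)
      have h7 := h3 p hp
      simp only at h6
      omega
    · have := h2 s hs hs'
      split_ifs at this ⊢ <;> omega
  · rintro ⟨⟨h1, h2, h3, h4⟩, h5⟩
    refine ⟨⟨by omega, ?_⟩, ?_⟩
    · intro l hl
      obtain ⟨p, hp, rfl⟩ := Multiset.mem_map.1 hl
      have := h1 p hp
      simp only
      omega
    · intro s hs hs'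
      have := h4 s hs hs'
      split_ifs at this ⊢ <;> omega

/-- a multiset without `inr` labels comes from pairs -/
lemma exists_map_inl (M : Multiset BLab) (h : ∀ p, Sum.inr p ∉ M) :
    ∃ R : Multiset (ℕ × ℕ), M = R.map Sum.inl := by
  induction M using Multiset.induction with
  | empty => exact ⟨0, rfl⟩
  | cons l M ih =>
    obtain ⟨R, rfl⟩ := ih (fun p hp => h p (Multiset.mem_cons_of_mem hp))
    rcases l with p | p
    · exact ⟨p ::ₘ R, by simp⟩
    · exact absurd (Multiset.mem_cons_self _ _) (h p)

def bdecA (r : ℕ) (x : BSt) : Multiset BLab := (bh r x).1.map Sum.inl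
def bdecB (x : BSt) : Multiset BLab := Sum.inr x.2 ::ₘ x.1.map Sum.inl

def bfin (n : ℕ) : Finset (Multiset BLab) :=
  ((bDS n).1 ∪ (bDS n).2).image (bdecA (n + 2)) ∪ (bDS n).1.image bdecB

lemma mem_bfin (n : ℕ) (M : Multiset BLab) : M ∈ bfin n ↔ BQ (n + 2) M := by
  obtain ⟨hD, hS⟩ := mem_bDS n
  simp only [bfin, Finset.mem_union, Finset.mem_image, Prod.exists]
  constructor
  · rintro (⟨R, a, b, h, rfl⟩ | ⟨R, a, b, h, rfl⟩)
    · have h' := bDS_U n (Finset.mem_union.2 h)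
      rw [bdecA, BQ_inl (by omega)]
      exact (BP_step_two (by omega)).2 ⟨a, b, R, rfl, h'⟩
    · rw [bdecB, BQ_inr (by omega)]
      exact (hD _ _ _).1 h
  · intro h
    by_cases hc : ∃ p, Sum.inr p ∈ M
    · right
      obtain ⟨⟨i, j⟩, hp⟩ := hc
      obtain ⟨M', rfl⟩ := Multiset.exists_cons_of_mem hp
      have hM' : ∀ p, Sum.inr p ∉ M' := by
        rintro ⟨i', j'⟩ hp'
        obtain ⟨M'', rfl⟩ := Multiset.exists_cons_of_mem hp'
        have h1 := h.1 _ (Multiset.mem_cons_self _ _)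
        have h2 := h.1 _ (Multiset.mem_cons_of_mem (Multiset.mem_cons_self _ _))
        have h3 := h.2 (n + 2) (by omega) (by omega)
        rw [bth_two (by omega)] at h3
        simp only [Multiset.map_cons, Multiset.sum_cons, bval] at h3
        simp only [bvalid] at h1 h2
        split_ifs at h3 <;> omega
      obtain ⟨R, rfl⟩ := exists_map_inl M' hM'
      rw [BQ_inr (by omega)] at h
      exact ⟨R, i, j, (hD _ _ _).2 h, rfl⟩
    · left
      push Not at hc
      obtain ⟨R, rfl⟩ := exists_map_inl M hc
      rw [BQ_inl (by omega)] at h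
      obtain ⟨a, b, R', rfl, h1, h2⟩ := (BP_step_two (by omega)).1 h
      refine ⟨R', a, b, ?_, rfl⟩
      rcases h2.lt_or_eq with h | h
      · left; rw [hD]; exact ⟨h1, h⟩
      · right; rw [hS]; exact ⟨h1, h⟩

lemma sum_bfin (n : ℕ) (w : ℕ → ℝ) : ∑ M ∈ bfin n, w (Multiset.card M) =
    bsum (bDS n).1 (fun k => w (k + 2)) + bsum (bDS n).2 (fun k => w (k + 2))
      + bsum (bDS n).1 (fun k => w (k + 1)) := by
  unfold bfin bsum
  rw [Finset.sum_union, Finset.sum_image, Finset.sum_union (bDS_disj n), Finset.sum_image]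
  · simp [bdecA, bdecB, bh]
  · rintro ⟨R, a, b⟩ h1 ⟨R', a', b'⟩ h2 h
    simp only [bdecB] at h
    rcases Multiset.cons_eq_cons.1 h with ⟨h1, h2⟩ | ⟨h1, cs, h2, h3⟩
    · have := Multiset.map_injective Sum.inl_injective h2
      simp only [Sum.inr.injEq] at h1
      rw [this, h1]
    · exfalso
      have : (Sum.inr (a', b') : BLab) ∈ R.map Sum.inl := by
        rw [h2]; exact Multiset.mem_cons_self _ _
      simp at this
  · intro x h1 y h2 h
    apply bh_injOn n h1 h2
    have := Multiset.map_injective Sum.inl_injective h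
    exact Prod.ext this rfl
  · rw [Finset.disjoint_left]
    intro M h1 h2
    obtain ⟨x, -, rfl⟩ := Finset.mem_image.1 h1
    obtain ⟨y, -, h⟩ := Finset.mem_image.1 h2
    have : (Sum.inr y.2 : BLab) ∈ bdecA (n + 2) x := by
      rw [← h]; exact Multiset.mem_cons_self _ _
    simp [bdecA] at this

lemma sum_bvec (r : ℕ) (M : Multiset BLab) (t : Fin r) :
    (M.map (bvec r)).sum t = (M.map (fun l => bval l (t.val + 1))).sum := by
  induction M using Multiset.induction with
  | empty => simp
  | cons l M ih => simp only [Multiset.map_cons, Multiset.sum_cons, Pi.add_apply, ih]; rfl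

lemma finsupp_sum_smul {r : ℕ} (m : (Fin r → ℕ) →₀ ℕ) :
    (m.sum fun v n => n • v) = (Finsupp.toMultiset m).sum := by
  rw [Finsupp.sum_toMultiset]

lemma BQ_iff (r : ℕ) (M : Multiset BLab) : BQ r M ↔ (∀ l ∈ M, bvalid r l) ∧
    (M.map (bvec r)).sum = thetaB r := by
  unfold BQ
  refine and_congr_right fun _ => ?_
  constructor
  · intro h
    funext t
    rw [sum_bvec, h _ (by omega) (by omega)]
    simp [bth, thetaB]
  · intro h s hs hs'
    have := congrFun h ⟨s - 1, by omega⟩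
    rw [sum_bvec] at this
    simp only [Nat.sub_add_cancel hs] at this
    rw [this]
    simp only [bth, thetaB]
    congr 1
    simp only [eq_iff_iff]
    omega

lemma NB_eq (n k : ℕ) : NB (n + 2) k (thetaB (n + 2)) =
    ((bfin n).filter (fun M => Multiset.card M = k)).card := by
  classical
  set r := n + 2 with hr
  rw [← Set.ncard_coe_finset]
  unfold NB
  set f := Function.invFunOn (bvec r) {l | bvalid r l} with hf
  have hleft : ∀ l, bvalid r l → f (bvec r l) = l := fun l hl =>
    (bvec_injOn r).leftInvOn_invFunOn hl
  have hmap : ∀ M : Multiset BLab, (∀ l ∈ M, bvalid r l) → (M.map (bvec r)).map f = M := by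
    intro M hM
    rw [Multiset.map_map]
    conv_rhs => rw [← Multiset.map_id M]
    exact Multiset.map_congr rfl (fun l hl => hleft l (hM l hl))
  rw [← Set.InjOn.ncard_image (f := fun M : Multiset BLab =>
    Multiset.toFinsupp (M.map (bvec r)))]
  · congr 1
    ext m
    simp only [Set.mem_ofPred_eq, Set.mem_image, Finset.coe_filter, mem_bfin, ← hr, BQ_iff]
    have hcard : (m.sum fun _ n => n) = Multiset.card (Finsupp.toMultiset m) := by
      rw [Finsupp.card_toMultiset]; rfl
    rw [finsupp_sum_smul, hcard]
    constructor
    · rintro ⟨h1, h2, h3⟩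
      have hroot : ∀ v ∈ Finsupp.toMultiset m, bvalid r (f v) ∧ bvec r (f v) = v := by
        intro v hv
        have := h1 v ((Finsupp.mem_toMultiset _ _).1 hv)
        rw [isPosRootB_iff] at this
        exact ⟨Function.invFunOn_mem this, Function.invFunOn_eq this⟩
      have hback : ((Finsupp.toMultiset m).map f).map (bvec r) = Finsupp.toMultiset m := by
        rw [Multiset.map_map]
        conv_rhs => rw [← Multiset.map_id (Finsupp.toMultiset m)]
        exact Multiset.map_congr rfl (fun l hl => (hroot l hl).2)
      refine ⟨(Finsupp.toMultiset m).map f, ⟨⟨?_, ?_⟩, ?_⟩, ?_⟩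
      · intro l hl
        obtain ⟨v, hv, rfl⟩ := Multiset.mem_map.1 hl
        exact (hroot v hv).1
      · rw [hback, h3]
      · rw [Multiset.card_map, h2]
      · rw [hback, Finsupp.toMultiset_toFinsupp]
    · rintro ⟨M, ⟨⟨h1, h2⟩, h3⟩, rfl⟩
      rw [Multiset.toFinsupp_toMultiset]
      refine ⟨?_, by rw [Multiset.card_map, h3], h2⟩
      intro v hv
      rw [Multiset.toFinsupp_support, Multiset.mem_toFinset] at hv
      obtain ⟨l, hl, rfl⟩ := Multiset.mem_map.1 hv
      exact (isPosRootB_iff _ _).2 ⟨l, h1 l hl, rfl⟩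
  · intro M hM M' hM' h
    have h := Multiset.toFinsupp.injective h
    have h1 := (mem_bfin n M).1 (Finset.mem_filter.1 hM).1
    have h2 := (mem_bfin n M').1 (Finset.mem_filter.1 hM').1
    rw [← hmap M h1.1, ← hmap M' h2.1, h]

lemma tsum_pB (n : ℕ) (w : ℕ → ℝ) : ∑' k, w k * pB (n + 2) k =
    ∑ M ∈ bfin n, w (Multiset.card M) := by
  classical
  rw [Finset.sum_comp w (fun M : Multiset BLab => Multiset.card M),
    tsum_eq_sum (s := (bfin n).image (fun M : Multiset BLab => Multiset.card M))]
  · apply Finset.sum_congr rfl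
    intro k _
    rw [pB, NB_eq, nsmul_eq_mul, mul_comm]
  · intro k hk
    rw [pB, NB_eq, Finset.filter_eq_empty_iff.2, Finset.card_empty]
    · simp
    · intro M hM h
      exact hk (Finset.mem_image.2 ⟨M, hM, h⟩)

lemma bsum_lin (A : Finset BSt) (a b c : ℝ) :
    bsum A (fun k => a * ((k : ℝ) + 2) ^ 2 + b * ((k : ℝ) + 2) + c) =
    a * bsum A (fun k => ((k : ℝ) + 2) ^ 2) + b * bsum A (fun k => (k : ℝ) + 2)
      + c * bsum A (fun _ => 1) := by
  unfold bsum
  rw [Finset.sum_add_distrib, Finset.sum_add_distrib, Finset.mul_sum, Finset.mul_sum,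
    Finset.mul_sum]
  simp only [mul_one]

lemma bsum_lin' (A : Finset BSt) (w : ℕ → ℝ) (a b c : ℝ)
    (h : ∀ k : ℕ, w k = a * ((k : ℝ) + 2) ^ 2 + b * ((k : ℝ) + 2) + c) :
    bsum A w =
    a * bsum A (fun k => ((k : ℝ) + 2) ^ 2) + b * bsum A (fun k => (k : ℝ) + 2)
      + c * bsum A (fun _ => 1) := by
  rw [← bsum_lin]
  congr 1
  funext k
  exact h k

noncomputable def bu (n : ℕ) : ℝ :=
  ((5 - Real.sqrt 5) / 2) ^ n + ((5 + Real.sqrt 5) / 2) ^ n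
noncomputable def bv (n : ℕ) : ℝ :=
  Real.sqrt 5 * (((5 + Real.sqrt 5) / 2) ^ n - ((5 - Real.sqrt 5) / 2) ^ n)

lemma sq5 : Real.sqrt 5 ^ 2 = 5 := Real.sq_sqrt (by norm_num)

lemma bu_succ (n : ℕ) : bu (n + 1) = (5 * bu n + bv n) / 2 := by
  unfold bu bv; ring

lemma bv_succ (n : ℕ) : bv (n + 1) = (5 * bv n + 5 * bu n) / 2 := by
  unfold bu bv
  rw [pow_succ, pow_succ]
  linear_combination (((5 + Real.sqrt 5) / 2) ^ n + ((5 - Real.sqrt 5) / 2) ^ n) / 2 * sq5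

lemma moments (n : ℕ) :
    bsum (bDS n).1 (fun _ => 1) = 1/2 * bu n + 3/10 * bv n ∧
    bsum (bDS n).1 (fun k => (k : ℝ) + 2) =
      bu n + 16/25 * bv n + n * (1/2 * bu n + 13/50 * bv n) ∧
    bsum (bDS n).1 (fun k => ((k : ℝ) + 2) ^ 2) =
      2 * bu n + 167/125 * bv n + n * (23/10 * bu n + 313/250 * bv n)
        + n ^ 2 * (12/25 * bu n + 29/125 * bv n) ∧
    bsum (bDS n).2 (fun _ => 1) = 1/2 * bu n + 1/10 * bv n ∧
    bsum (bDS n).2 (fun k => (k : ℝ) + 2) =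
      3/2 * bu n + 19/50 * bv n + n * (2/5 * bu n + 3/25 * bv n) ∧
    bsum (bDS n).2 (fun k => ((k : ℝ) + 2) ^ 2) =
      9/2 * bu n + 353/250 * bv n + n * (137/50 * bu n + 221/250 * bv n)
        + n ^ 2 * (17/50 * bu n + 31/250 * bv n) := by
  induction n with
  | zero => norm_num [bsum, bDS, bu, bv]
  | succ n ih =>
    obtain ⟨d0, d1, d2, s0, s1, s2⟩ := ih
    simp only [bsum_D, bsum_S, bu_succ, bv_succ]
    have e1 : ∀ A, bsum A (fun k => ((k + 1 : ℕ) : ℝ) + 2) = _ := fun A =>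
      bsum_lin' A _ 0 1 1 (fun k => by push_cast; ring)
    have e2 : ∀ A, bsum A (fun k => (((k + 1 : ℕ) : ℝ) + 2) ^ 2) = _ := fun A =>
      bsum_lin' A _ 1 2 1 (fun k => by push_cast; ring)
    have e3 : ∀ A, bsum A (fun k => ((k + 2 : ℕ) : ℝ) + 2) = _ := fun A =>
      bsum_lin' A _ 0 1 2 (fun k => by push_cast; ring)
    have e4 : ∀ A, bsum A (fun k => (((k + 2 : ℕ) : ℝ) + 2) ^ 2) = _ := fun A =>
      bsum_lin' A _ 1 4 4 (fun k => by push_cast; ring)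
    simp only [e1, e2, e3, e4, d0, d1, d2, s0, s1, s2]
    push_cast
    refine ⟨?_, ?_, ?_, ?_, ?_, ?_⟩ <;> ring

lemma total0 (n : ℕ) : ∑' k, pB (n + 2) k = 3/2 * bu n + 7/10 * bv n := by
  obtain ⟨d0, d1, d2, s0, s1, s2⟩ := moments n
  have := tsum_pB n (fun _ => 1)
  simp only [one_mul] at this
  rw [this, sum_bfin n (fun _ => 1), d0, s0]
  ring

lemma total1 (n : ℕ) : ∑' k : ℕ, (k : ℝ) * pB (n + 2) k =
    3 * bu n + 34/25 * bv n + n * (7/5 * bu n + 16/25 * bv n) := by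
  obtain ⟨d0, d1, d2, s0, s1, s2⟩ := moments n
  rw [tsum_pB n (fun k => (k : ℝ)), sum_bfin n (fun k => (k : ℝ)),
    bsum_lin' (bDS n).1 _ 0 1 0 (fun k => by push_cast; ring),
    bsum_lin' (bDS n).2 _ 0 1 0 (fun k => by push_cast; ring),
    bsum_lin' (bDS n).1 (fun k => ((k + 1 : ℕ) : ℝ)) 0 1 (-1) (fun k => by push_cast; ring),
    d0, d1, d2, s0, s1, s2]
  ring

lemma total2 (n : ℕ) : ∑' k : ℕ, (k : ℝ) ^ 2 * pB (n + 2) k =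
    7 * bu n + 388/125 * bv n + n * (317/50 * bu n + 717/250 * bv n)
      + n ^ 2 * (13/10 * bu n + 147/250 * bv n) := by
  obtain ⟨d0, d1, d2, s0, s1, s2⟩ := moments n
  rw [tsum_pB n (fun k => (k : ℝ) ^ 2), sum_bfin n (fun k => (k : ℝ) ^ 2),
    bsum_lin' (bDS n).1 _ 1 0 0 (fun k => by push_cast; ring),
    bsum_lin' (bDS n).2 _ 1 0 0 (fun k => by push_cast; ring),
    bsum_lin' (bDS n).1 (fun k => ((k + 1 : ℕ) : ℝ) ^ 2) 1 (-2) 1 (fun k => by push_cast; ring),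
    d0, d1, d2, s0, s1, s2]
  ring

/-- Theorem 1.2, type `B_r`: closed formulas for the mean and variance of the number of
positive roots used in the decompositions of the highest root of `B_r`. -/
theorem mean_variance_highestRoot_typeB (r : ℕ) (hr : 2 ≤ r) :
    muB r =
      ((5 - Real.sqrt 5 + (25 - 13 * Real.sqrt 5) * r) * (5 - Real.sqrt 5) ^ r +
        (5 + Real.sqrt 5 + (25 + 13 * Real.sqrt 5) * r) * (5 + Real.sqrt 5) ^ r) /
      (5 * ((5 - 3 * Real.sqrt 5) * (5 - Real.sqrt 5) ^ r +
        (5 + 3 * Real.sqrt 5) * (5 + Real.sqrt 5) ^ r)) ∧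
    varB r =
      (20 ^ (r + 1) * (r : ℝ) ^ 2 +
        (26 * (3 * Real.sqrt 5 - 7) * (5 - Real.sqrt 5) ^ (2 * r) -
          26 * (3 * Real.sqrt 5 + 7) * (5 + Real.sqrt 5) ^ (2 * r) +
          (36 / 5) * 20 ^ (r + 1)) * r +
        2 * (73 - 25 * Real.sqrt 5) * (5 - Real.sqrt 5) ^ (2 * r) +
        2 * (73 + 25 * Real.sqrt 5) * (5 + Real.sqrt 5) ^ (2 * r) -
        (63 / 5) * 20 ^ (r + 1)) /
      (-5 * ((5 - 3 * Real.sqrt 5) * (5 - Real.sqrt 5) ^ r +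
        (5 + 3 * Real.sqrt 5) * (5 + Real.sqrt 5) ^ r) ^ 2) := by
  obtain ⟨n, rfl⟩ : ∃ n, r = n + 2 := ⟨r - 2, by omega⟩
  have h5 := sq5
  have hs0 : 0 ≤ Real.sqrt 5 := Real.sqrt_nonneg 5
  have hT0 : 0 < 3/2 * bu n + 7/10 * bv n := by
    have hs : Real.sqrt 5 < 5 := by nlinarith
    have hx : 0 < (5 - Real.sqrt 5) / 2 := by linarith
    have h1 : 0 < bu n := by unfold bu; positivity
    have h2 : 0 ≤ bv n := by
      unfold bv
      apply mul_nonneg hs0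
      rw [sub_nonneg]
      apply pow_le_pow_left₀ hx.le
      linarith
    linarith
  have hc : (0 : ℝ) < 2 ^ n := by positivity
  have hU : bu n = ((5 - Real.sqrt 5) ^ n + (5 + Real.sqrt 5) ^ n) / 2 ^ n := by
    unfold bu; rw [div_pow, div_pow]; ring
  have hV : bv n = Real.sqrt 5 * ((5 + Real.sqrt 5) ^ n - (5 - Real.sqrt 5) ^ n) / 2 ^ n := by
    unfold bv; rw [div_pow, div_pow]; ring
  have hXY : (20 : ℝ) ^ n = (5 - Real.sqrt 5) ^ n * (5 + Real.sqrt 5) ^ n := by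
    rw [← mul_pow]
    congr 1
    linear_combination h5
  have hp2 : (5 - Real.sqrt 5) ^ 2 = 30 - 10 * Real.sqrt 5 := by linear_combination h5
  have hq2 : (5 + Real.sqrt 5) ^ 2 = 30 + 10 * Real.sqrt 5 := by linear_combination h5
  have hmu : muB (n + 2) = (3 * bu n + 34/25 * bv n + n * (7/5 * bu n + 16/25 * bv n)) /
      (3/2 * bu n + 7/10 * bv n) := by
    rw [muB, total0, total1]
  have hvar : varB (n + 2) = ((7 * bu n + 388/125 * bv n + n * (317/50 * bu n + 717/250 * bv n)
      + n ^ 2 * (13/10 * bu n + 147/250 * bv n)) * (3/2 * bu n + 7/10 * bv n) -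
      (3 * bu n + 34/25 * bv n + n * (7/5 * bu n + 16/25 * bv n)) ^ 2) /
      (3/2 * bu n + 7/10 * bv n) ^ 2 := by
    rw [varB, total0, total2, hmu]
    field_simp
  rw [hmu, hvar]
  have h20 : (20 : ℝ) ^ (n + 2 + 1) =
      8000 * ((5 - Real.sqrt 5) ^ n * (5 + Real.sqrt 5) ^ n) := by
    rw [← hXY]; ring
  have hX2 : (5 - Real.sqrt 5) ^ (2 * (n + 2)) =
      (30 - 10 * Real.sqrt 5) ^ 2 * ((5 - Real.sqrt 5) ^ n) ^ 2 := by
    rw [← hp2]; ring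
  have hY2 : (5 + Real.sqrt 5) ^ (2 * (n + 2)) =
      (30 + 10 * Real.sqrt 5) ^ 2 * ((5 + Real.sqrt 5) ^ n) ^ 2 := by
    rw [← hq2]; ring
  rw [h20, hX2, hY2, pow_add _ n 2, pow_add _ n 2, hp2, hq2]
  generalize (5 - Real.sqrt 5) ^ n = X at *
  generalize (5 + Real.sqrt 5) ^ n = Y at *
  generalize bu n = u at *
  generalize bv n = v at *
  generalize (2 : ℝ) ^ n = c at *
  generalize Real.sqrt 5 = s at *
  have hU' : X + Y = c * u := by rw [hU]; field_simp
  have hV' : s * (Y - X) = c * v := by rw [hV]; field_simp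
  have hden : (5 - 3 * s) * (X * (30 - 10 * s)) + (5 + 3 * s) * (Y * (30 + 10 * s)) =
      200 * c * (3/2 * u + 7/10 * v) := by
    linear_combination 300 * hU' + 140 * hV' + 30 * (X + Y) * h5
  have hc' : c ≠ 0 := hc.ne'
  have hT' : 3/2 * u + 7/10 * v ≠ 0 := hT0.ne'
  push_cast
  rw [hden]
  constructor
  · have hnum : (5 - s + (25 - 13 * s) * (n + 2)) * (X * (30 - 10 * s)) +
      (5 + s + (25 + 13 * s) * (n + 2)) * (Y * (30 + 10 * s)) =
      1000 * c * (3 * u + 34/25 * v + n * (7/5 * u + 16/25 * v)) := by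
      grind
    rw [hnum, div_eq_div_iff hT' (by positivity)]
    ring
  · rw [div_eq_div_iff (by positivity) (by simp; tauto)]
    have key : (8000 * (X * Y) * ((n : ℝ) + 2) ^ 2 +
        (26 * (3 * s - 7) * ((30 - 10 * s) ^ 2 * X ^ 2) -
          26 * (3 * s + 7) * ((30 + 10 * s) ^ 2 * Y ^ 2) +
          (36 / 5) * (8000 * (X * Y))) * ((n : ℝ) + 2) +
        2 * (73 - 25 * s) * ((30 - 10 * s) ^ 2 * X ^ 2) +
        2 * (73 + 25 * s) * ((30 + 10 * s) ^ 2 * Y ^ 2) -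
        (63 / 5) * (8000 * (X * Y))) = -200000 * c ^ 2 *
        ((7 * u + 388/125 * v + n * (317/50 * u + 717/250 * v)
      + n ^ 2 * (13/10 * u + 147/250 * v)) * (3/2 * u + 7/10 * v) -
      (3 * u + 34/25 * v + n * (7/5 * u + 16/25 * v)) ^ 2) := by
      have hv2 : c ^ 2 * v ^ 2 = 5 * (Y - X) ^ 2 := by
        linear_combination (-(s * (Y - X)) - c * v) * hV' + (Y - X) ^ 2 * h5
      have huv : c ^ 2 * (u * v) = s * (Y ^ 2 - X ^ 2) := by
        linear_combination (-(s * (Y - X))) * hU' - c * u * hV'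
      have hu2 : c ^ 2 * u ^ 2 = (X + Y) ^ 2 := by
        linear_combination (-(X + Y) - c * u) * hU'
      linear_combination
        200000 * ((7 + 317/50 * (n : ℝ) + 13/10 * (n : ℝ) ^ 2) * (3/2)
          - (3 + 7/5 * (n : ℝ)) ^ 2) * hu2 +
        200000 * ((7 + 317/50 * (n : ℝ) + 13/10 * (n : ℝ) ^ 2) * (7/10)
          + (388/125 + 717/250 * (n : ℝ) + 147/250 * (n : ℝ) ^ 2) * (3/2)
          - 2 * (3 + 7/5 * (n : ℝ)) * (34/25 + 16/25 * (n : ℝ))) * huv +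
        200000 * ((388/125 + 717/250 * (n : ℝ) + 147/250 * (n : ℝ) ^ 2) * (7/10)
          - (34/25 + 16/25 * (n : ℝ)) ^ 2) * hv2 +
        (X ^ 2 * (100 * (26 * (3 * s - 7) * ((n : ℝ) + 2) + 2 * (73 - 25 * s))
            - 600 * (78 * ((n : ℝ) + 2) - 50))
          + Y ^ 2 * (100 * (-26 * (3 * s + 7) * ((n : ℝ) + 2) + 2 * (73 + 25 * s))
            + 600 * (-78 * ((n : ℝ) + 2) + 50))) * h5
    rw [key]
    ring
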